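/- If O ⊆ C is a reasonable solution of the constructed DKM instance, then φ_KM(C,O) = N + M·(1 + (3/2)ε) + (ε/(2W))·Σ_{b_m∈B} w(b_m) + (ε/(2W))·(c−1)·Σ_{b_m∈B_f(T_O)} w(b_m). -/

import Mathlib

open Finset
open scoped ENNReal

/-- A literal over `N` variables: a variable index together with a polarity
(`true` = positive literal `x_n`, `false` = negated literal `x̄_n`). -/
abbrev Lit (N : ℕ) := Fin N × Bool

/-- The negation of a literal. -/
def Lit.neg {N : ℕ} (p : Lit N) : Lit N := (p.1, !p.2)

/-- A 2-SAT clause: two literals over distinct variables. -/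
structure Clause (N : ℕ) where
  l1 : Lit N
  l2 : Lit N
  distinct : l1.1 ≠ l2.1

/-- The literal `p` occurs in the clause `cl`. -/
def Clause.occurs {N : ℕ} (p : Lit N) (cl : Clause N) : Prop := p = cl.l1 ∨ p = cl.l2

instance {N : ℕ} (p : Lit N) (cl : Clause N) : Decidable (Clause.occurs p cl) := by
  unfold Clause.occurs; infer_instance

/-- The truth assignment `T` satisfies the clause `cl`. -/
def Clause.satisfied {N : ℕ} (T : Fin N → Bool) (cl : Clause N) : Prop :=
  T cl.l1.1 = cl.l1.2 ∨ T cl.l2.1 = cl.l2.2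

instance {N : ℕ} (T : Fin N → Bool) (cl : Clause N) : Decidable (Clause.satisfied T cl) := by
  unfold Clause.satisfied; infer_instance

/-- The point set of the construction: one point per literal (facility/literal points)
and one point per clause. -/
abbrev Pt (N M : ℕ) := Lit N ⊕ Fin M

/-- The SAT cost `w(B,T)`: total weight of the clauses satisfied by `T`. -/
def satCost {N M : ℕ} (b : Fin M → Clause N) (w : Fin M → ℕ) (T : Fin N → Bool) : ℕ :=
  ∑ m ∈ Finset.univ.filter (fun m => Clause.satisfied T (b m)), w m

/-- The distance function of the constructed DKM instance. -/
noncomputable def dKM {N M : ℕ} (b : Fin M → Clause N) (w : Fin M → ℕ) (W c ε : ℝ) :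
    Pt N M → Pt N M → ℝ := fun p q =>
  if p = q then 0
  else
    match p, q with
    | Sum.inl x, Sum.inl y => if x.1 = y.1 then 1 else 1 + 2 * ε
    | Sum.inl x, Sum.inr m =>
        if Clause.occurs x (b m) then 1 + ε * (3 / 2 + (w m : ℝ) / (2 * W))
        else if Clause.occurs (Lit.neg x) (b m) then 1 + ε * (3 / 2 + c * (w m : ℝ) / (2 * W))
        else 1 + 2 * ε
    | Sum.inr m, Sum.inl x =>
        if Clause.occurs x (b m) then 1 + ε * (3 / 2 + (w m : ℝ) / (2 * W))
        else if Clause.occurs (Lit.neg x) (b m) then 1 + ε * (3 / 2 + c * (w m : ℝ) / (2 * W))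
        else 1 + 2 * ε
    | Sum.inr _, Sum.inr _ => 1 + 2 * ε

/-- The K-means cost `φ_KM(C,O)` of a set of open locations `O ⊆ C`: every point connects
to the nearest open location (`∞` if `O = ∅`). -/
noncomputable def phiKM {N M : ℕ} (d : Pt N M → Pt N M → ℝ) (O : Finset (Pt N M)) : ℝ≥0∞ :=
  ∑ p : Pt N M, ⨅ o ∈ O, ENNReal.ofReal (d p o)

/-- A set `O ⊆ C` is reasonable if it consists of literal points only, has size `N`,
and contains a point corresponding to each variable. -/
def ReasonableKM {N M : ℕ} (O : Finset (Pt N M)) : Prop :=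
  (∀ p ∈ O, ∃ l : Lit N, p = Sum.inl l) ∧ O.card = N ∧
    ∀ n : Fin N, Sum.inl (n, true) ∈ O ∨ Sum.inl (n, false) ∈ O

/-- The truth assignment `T_O` induced by a set `O ⊆ C`: `x_n` is true iff the point
`x_n` is in `O`. -/
def assignOfKM {N M : ℕ} (O : Finset (Pt N M)) : Fin N → Bool :=
  fun n => decide (Sum.inl (n, true) ∈ O)

/-!
A reasonable `O` has `N` points and meets all `N` variables, so it consists of exactly one literal
per variable: the one that is true under `T = T_O`. Every true literal costs `0` and every false
literal costs `1`, paid to its negation, so the literals cost `N` in total. The distances from a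
clause point of weight `w` to the literal points are ordered as

  `1 + ε (3/2 + w / 2W) ≤ 1 + ε (3/2 + c w / 2W) ≤ 1 + 2 ε`,

where the second inequality is `c w ≤ W`. A satisfied clause contains an open literal and pays the
first value; an unsatisfied clause contains no open literal but the negation of one, and pays the
second.
-/

theorem Lit.neg_mk_eq_self {N : ℕ} {x : Lit N} {v : Bool} (h : v ≠ x.2) :
    Lit.neg (x.1, v) = x :=
  Prod.ext rfl (Bool.not_eq.mpr h)

namespace Clause

variable {N : ℕ} {cl : Clause N} {T : Fin N → Bool}

theorem satisfied_iff_exists_occurs : satisfied T cl ↔ ∃ n, occurs (n, T n) cl := by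
  constructor
  · rintro (h | h)
    · exact ⟨cl.l1.1, .inl (Prod.ext rfl h)⟩
    · exact ⟨cl.l2.1, .inr (Prod.ext rfl h)⟩
  · rintro ⟨n, h | h⟩
    · exact .inl (by rw [← h])
    · exact .inr (by rw [← h])

theorem exists_occurs_neg_of_not_satisfied (h : ¬ satisfied T cl) :
    ∃ n, occurs (Lit.neg (n, T n)) cl :=
  ⟨cl.l1.1, .inl (Lit.neg_mk_eq_self fun h₁ => h (.inl h₁))⟩

end Clause

/-- The set of literal points that are true under the assignment `T`, as a set of open locations;
every reasonable set has this form. -/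
def trueLits {N M : ℕ} (T : Fin N → Bool) : Finset (Pt N M) :=
  univ.image fun n => Sum.inl (n, T n)

theorem isLeast_image_trueLits_iff {N M : ℕ} {α : Type*} [Preorder α] {f : Pt N M → α}
    {T : Fin N → Bool} {a : α} :
    IsLeast (f '' ↑(trueLits T : Finset (Pt N M))) a ↔
      (∃ n, f (Sum.inl (n, T n)) = a) ∧ ∀ n, a ≤ f (Sum.inl (n, T n)) := by
  simp [IsLeast, lowerBounds, trueLits]

theorem card_trueLits {N M : ℕ} (T : Fin N → Bool) : #(trueLits T : Finset (Pt N M)) = N := by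
  have hinj : Function.Injective fun n => (Sum.inl (n, T n) : Pt N M) :=
    fun _ _ h => congrArg Prod.fst (Sum.inl_injective h)
  rw [trueLits, card_image_of_injective _ hinj, card_univ, Fintype.card_fin]

theorem ReasonableKM.eq_trueLits {N M : ℕ} {O : Finset (Pt N M)} (hO : ReasonableKM O) :
    O = trueLits (assignOfKM O) := by
  obtain ⟨-, hcard, hcover⟩ := hO
  have hsub : trueLits (assignOfKM O) ⊆ O := by
    intro p hp
    obtain ⟨n, -, rfl⟩ := mem_image.mp hp
    by_cases h : Sum.inl (n, true) ∈ O
    · simp [assignOfKM, h]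
    · simpa [assignOfKM, h] using (hcover n).resolve_left h
  exact (eq_of_subset_of_card_le hsub (by rw [card_trueLits, hcard])).symm

theorem phiKM_eq_ofReal_sum {N M : ℕ} {d : Pt N M → Pt N M → ℝ} {O : Finset (Pt N M)}
    {g : Pt N M → ℝ} (hg : ∀ p, 0 ≤ g p) (hleast : ∀ p, IsLeast (d p '' O) (g p)) :
    phiKM d O = ENNReal.ofReal (∑ p, g p) := by
  rw [phiKM, ENNReal.ofReal_sum_of_nonneg fun p _ => hg p]
  refine sum_congr rfl fun p _ => ?_
  have hmin := (ENNReal.ofReal_mono.map_isLeast (hleast p)).isGLB.sInf_eq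
  rwa [Set.image_image, sInf_image] at hmin

section Distances

variable {N M : ℕ} {b : Fin M → Clause N} {w : Fin M → ℕ} {W c ε : ℝ}

theorem dKM_self (p : Pt N M) : dKM b w W c ε p p = 0 := by
  simp [dKM]

theorem dKM_lit_lit_of_fst_eq {x y : Lit N} (hne : x ≠ y) (h : x.1 = y.1) :
    dKM b w W c ε (Sum.inl x) (Sum.inl y) = 1 := by
  simp [dKM, hne, h]

theorem one_le_dKM_lit_lit (hε : 0 ≤ ε) {x y : Lit N} (hne : x ≠ y) :
    1 ≤ dKM b w W c ε (Sum.inl x) (Sum.inl y) := by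
  simp only [dKM, Sum.inl.injEq, hne, if_false]
  split_ifs <;> linarith

theorem dKM_clause_lit_of_occurs {m : Fin M} {x : Lit N} (h : Clause.occurs x (b m)) :
    dKM b w W c ε (Sum.inr m) (Sum.inl x) = 1 + ε * (3 / 2 + w m / (2 * W)) := by
  simp [dKM, h]

theorem dKM_clause_lit_of_occurs_neg {m : Fin M} {x : Lit N} (h : ¬ Clause.occurs x (b m))
    (hneg : Clause.occurs (Lit.neg x) (b m)) :
    dKM b w W c ε (Sum.inr m) (Sum.inl x) = 1 + ε * (3 / 2 + c * w m / (2 * W)) := by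
  simp [dKM, h, hneg]

theorem le_dKM_clause_lit_of_not_occurs (hε : 0 ≤ ε) (hW : 0 < W) {m : Fin M}
    (hcw : c * w m ≤ W) {x : Lit N} (h : ¬ Clause.occurs x (b m)) :
    1 + ε * (3 / 2 + c * w m / (2 * W)) ≤ dKM b w W c ε (Sum.inr m) (Sum.inl x) := by
  have hhalf : c * w m / (2 * W) ≤ 1 / 2 := by
    rw [div_le_iff₀ (by positivity)]
    linarith
  simp only [dKM, reduceCtorEq, h, if_false]
  split_ifs
  · exact le_rfl
  · linarith [mul_le_mul_of_nonneg_left hhalf hε]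

theorem le_dKM_clause_lit (hε : 0 ≤ ε) (hc : 1 ≤ c) (hW : 0 < W) {m : Fin M}
    (hcw : c * w m ≤ W) (x : Lit N) :
    1 + ε * (3 / 2 + w m / (2 * W)) ≤ dKM b w W c ε (Sum.inr m) (Sum.inl x) := by
  by_cases h : Clause.occurs x (b m)
  · exact (dKM_clause_lit_of_occurs h).ge
  · refine le_trans ?_ (le_dKM_clause_lit_of_not_occurs hε hW hcw h)
    gcongr
    exact le_mul_of_one_le_left (Nat.cast_nonneg _) hc

end Distances

/-- The cost at which the point `p` connects to the nearest literal that is true under `T`. -/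
noncomputable def connectionCost {N M : ℕ} (b : Fin M → Clause N) (w : Fin M → ℕ) (W c ε : ℝ)
    (T : Fin N → Bool) : Pt N M → ℝ
  | Sum.inl x => if x.2 = T x.1 then 0 else 1
  | Sum.inr m => 1 + ε * (3 / 2 + (if Clause.satisfied T (b m) then 1 else c) * w m / (2 * W))

section ConnectionCost

variable {N M : ℕ} {b : Fin M → Clause N} {w : Fin M → ℕ} {W c ε : ℝ} {T : Fin N → Bool}

theorem connectionCost_nonneg (hε : 0 ≤ ε) (hc : 0 ≤ c) (hW : 0 ≤ W) (p : Pt N M) :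
    0 ≤ connectionCost b w W c ε T p := by
  rcases p with x | m <;> simp only [connectionCost] <;> split_ifs <;> positivity

theorem isLeast_connectionCost_lit (hε : 0 ≤ ε) (x : Lit N) :
    IsLeast (dKM b w W c ε (Sum.inl x) '' ↑(trueLits T : Finset (Pt N M)))
      (connectionCost b w W c ε T (Sum.inl x)) := by
  rw [isLeast_image_trueLits_iff]
  by_cases hx : x.2 = T x.1
  · simp only [connectionCost, hx, if_true]
    have hx_open : (x.1, T x.1) = x := Prod.ext rfl hx.symm
    refine ⟨⟨x.1, by rw [hx_open, dKM_self]⟩, fun n => ?_⟩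
    by_cases hne : x = (n, T n)
    · rw [hne, dKM_self]
    · exact zero_le_one.trans (one_le_dKM_lit_lit hε hne)
  · simp only [connectionCost, hx, if_false]
    have hne (n : Fin N) : x ≠ (n, T n) := by
      rintro rfl
      exact hx rfl
    exact ⟨⟨x.1, dKM_lit_lit_of_fst_eq (hne x.1) rfl⟩, fun n => one_le_dKM_lit_lit hε (hne n)⟩

theorem isLeast_connectionCost_clause (hε : 0 ≤ ε) (hc : 1 ≤ c) (hW : 0 < W) {m : Fin M}
    (hcw : c * w m ≤ W) :
    IsLeast (dKM b w W c ε (Sum.inr m) '' ↑(trueLits T : Finset (Pt N M)))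
      (connectionCost b w W c ε T (Sum.inr m)) := by
  rw [isLeast_image_trueLits_iff]
  by_cases hsat : Clause.satisfied T (b m)
  · simp only [connectionCost, hsat, if_true, one_mul]
    obtain ⟨n, hn⟩ := Clause.satisfied_iff_exists_occurs.mp hsat
    exact ⟨⟨n, dKM_clause_lit_of_occurs hn⟩, fun _ => le_dKM_clause_lit hε hc hW hcw _⟩
  · simp only [connectionCost, hsat, if_false]
    have hnot (k : Fin N) : ¬ Clause.occurs (k, T k) (b m) :=
      fun hk => hsat (Clause.satisfied_iff_exists_occurs.mpr ⟨k, hk⟩)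
    obtain ⟨n, hn⟩ := Clause.exists_occurs_neg_of_not_satisfied hsat
    exact ⟨⟨n, dKM_clause_lit_of_occurs_neg (hnot n) hn⟩,
      fun k => le_dKM_clause_lit_of_not_occurs hε hW hcw (hnot k)⟩

theorem sum_connectionCost_lit : ∑ x, connectionCost b w W c ε T (Sum.inl x) = N := by
  have hpair (n : Fin N) : ∑ v, connectionCost b w W c ε T (Sum.inl (n, v)) = 1 := by
    cases h : T n <;> simp [connectionCost, h]
  rw [Fintype.sum_prod_type, sum_congr rfl fun n _ => hpair n]
  simp

theorem sum_connectionCost_clause :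
    ∑ m, connectionCost b w W c ε T (Sum.inr m) =
      M * (1 + ε * (3 / 2)) + ε / (2 * W) * ∑ m, (w m : ℝ) +
        ε / (2 * W) * (c - 1) * ∑ m with ¬ Clause.satisfied T (b m), (w m : ℝ) := by
  have hsplit (m : Fin M) : connectionCost b w W c ε T (Sum.inr m) =
      (1 + ε * (3 / 2)) + ε / (2 * W) * w m +
        ε / (2 * W) * (c - 1) * if ¬ Clause.satisfied T (b m) then (w m : ℝ) else 0 := by
    by_cases h : Clause.satisfied T (b m)
    · simp only [connectionCost, h, if_true, not_true, if_false]
      ring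
    · simp only [connectionCost, h, if_false, not_false_eq_true, if_true]
      ring
  rw [sum_congr rfl fun m _ => hsplit m, sum_add_distrib, sum_add_distrib, ← mul_sum, ← mul_sum,
    ← sum_filter, sum_const, card_univ, Fintype.card_fin, nsmul_eq_mul]

end ConnectionCost

theorem phiKM_of_reasonable_general {N M : ℕ} {b : Fin M → Clause N} {w : Fin M → ℕ}
    {W c ε : ℝ} (hc : 1 ≤ c) (hε : 0 ≤ ε) (hW : 0 < W) (hcw : ∀ m, c * w m ≤ W)
    {O : Finset (Pt N M)} (hO : ReasonableKM O) :
    phiKM (dKM b w W c ε) O = ENNReal.ofReal (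
      N + M * (1 + ε * (3 / 2)) + ε / (2 * W) * (∑ m, (w m : ℝ)) +
      ε / (2 * W) * (c - 1) *
        ∑ m with ¬ Clause.satisfied (assignOfKM O) (b m), (w m : ℝ)) := by
  have hleast (p : Pt N M) :
      IsLeast (dKM b w W c ε p '' O) (connectionCost b w W c ε (assignOfKM O) p) := by
    nth_rewrite 1 [hO.eq_trueLits]
    rcases p with x | m
    · exact isLeast_connectionCost_lit hε x
    · exact isLeast_connectionCost_clause hε hc hW (hcw m)
  have hnonneg := connectionCost_nonneg (b := b) (w := w) (T := assignOfKM O) hε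
    (zero_le_one.trans hc) hW.le
  rw [phiKM_eq_ofReal_sum hnonneg hleast, Fintype.sum_sum_type, sum_connectionCost_lit,
    sum_connectionCost_clause, ← add_assoc, ← add_assoc]

/-- The DKM cost of a reasonable solution. -/
theorem phiKM_of_reasonable {N M : ℕ} (hM : 2 ≤ M) (b : Fin M → Clause N) (w : Fin M → ℕ)
    (hw : ∀ m, 0 < w m) (c : ℝ) (hc1 : 1 < c) (hc2 : c < 2)
    (W : ℝ) (hW : W = (M : ℝ) * ((Finset.univ.sup w : ℕ) : ℝ))
    (ε : ℝ) (hε : ε = 1 / (4 * (N : ℝ) + 2 * (M : ℝ)))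
    (O : Finset (Pt N M)) (hO : ReasonableKM O) :
    phiKM (dKM b w W c ε) O = ENNReal.ofReal (
      (N : ℝ) + (M : ℝ) * (1 + ε * (3 / 2)) + (ε / (2 * W)) * (∑ m, (w m : ℝ)) +
      (ε / (2 * W)) * (c - 1) * (∑ m ∈ Finset.univ.filter
        (fun m => ¬ Clause.satisfied (assignOfKM O) (b m)), (w m : ℝ))) := by
  have hcw (m : Fin M) : c * w m ≤ W := by
    have hcM : c ≤ M := hc2.le.trans (by exact_mod_cast hM)
    have hsup : w m ≤ univ.sup w := le_sup (mem_univ m)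
    rw [hW]
    gcongr
  have hW_pos : 0 < W := by
    have m₀ : Fin M := ⟨0, by lia⟩
    have hw₀ : (0 : ℝ) < w m₀ := by exact_mod_cast hw m₀
    exact (mul_pos (zero_lt_one.trans hc1) hw₀).trans_le (hcw m₀)
  have hε_nonneg : 0 ≤ ε := by
    rw [hε]
    positivity
  exact phiKM_of_reasonable_general hc1.le hε_nonneg hW_pos hcw hO
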